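/- arXiv:0805.0730 — 2 statements merged into one kernel-verified Lean document; each statement's English description precedes it below -/
import Mathlib

section
/- Let A = {a1, …, am} be a finite alphabet (m ≥ 2) ordered by a1 < a2 < ⋯ < am, and for 1 ≤ i ≤ m let B_i = {a_i, …, a_m} and B̄_i = {x̄ : x ∈ B_i}. An episturmian word w over A is an infinite Lyndon word if and only if there exists an integer j with 1 ≤ j < m such that the normalized directive word of w belongs to (B̄_2^* a_1)^* (B̄_3^* a_2)^* ⋯ (B̄_j^* a_{j−1})^* (B̄_{j+1}^* a_j)^* (B̄_{j+1}^+ {a_j}^+)^ω. -/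
/-!
Let `ts n` be the desubstituted words, `ts 0 = w`, and `f n = ts n 0` their first letters: `f n` is
the first `L`-spinned letter of `Δ` at or after position `n`. The word `w` is Lyndon if and only if
(`Good`) each `R`-spinned `x̄` at `n` satisfies `f n < x`, the sequence `f` is nondecreasing, and
there are infinitely many `R`-spinned letters.

Both kinds of morphism are strictly increasing for the lexicographic order: `R_a` always, because
`R_a(b)` begins with `b`, and `L_a` on words with all letters at least `a` (`ImgR.lexLt`,
`ImgL.lexLt`).

If `w` is Lyndon, monotonicity makes every `ts n` Lyndon, so `f n` is the least letter of `ts n`.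
This gives `f n ≤ f (n + 1)`, and `f n ≤ x` for `x̄` at `n`; equality would mean that the next
`L`-spinned letter is `x`, which normalization forbids. With only `L`-spinned letters from some
point on, `f` being eventually constant, some `ts n` would be a constant word, which is not Lyndon
(`Desub.good`).

Conversely, under `Good`, a suffix of `ts n` at a positive position either begins with a letter
larger than `f n`, or is the image of a suffix of `ts (n + 1)` at a positive position that is no
larger, and strictly smaller at an `R`-step. Induction on the position, with the infinitely many
`R`-steps, proves that all letters of `ts n` are at least `f n`, then that each `ts n` is Lyndon
(`Good.head_le`, `Good.lyndon`).

It remains to see that `Good` is the product form. Level `k` of the product is the interval of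
positions where `f` takes the value `a_k`: such an interval ends with an `L`-spinned `a_k`, because
`f` is unchanged at `R`-steps, and its `R`-spinned letters exceed `a_k`. The eventual value of `f`
is `a_j`; it is not the largest letter since `R`-spinned letters keep occurring above it. The last
interval is infinite and is cut into blocks before each `R`-spinned letter that follows an
`L`-spinned one.
-/

namespace EpiQP

/-- `u` is a prefix of the infinite word `w`. -/
def IsPref {σ : Type*} (u : List σ) (w : ℕ → σ) : Prop :=
  ∀ (i : ℕ) (h : i < u.length), u.get ⟨i, h⟩ = w i

/-- The prefix of length `n` of the infinite word `w`. -/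
def prefWord {σ : Type*} (w : ℕ → σ) (n : ℕ) : List σ :=
  List.ofFn (fun i : Fin n => w i)

/-- The finite word `u` occurs in the infinite word `w` at position `k`. -/
def OccursAt {σ : Type*} (u : List σ) (w : ℕ → σ) (k : ℕ) : Prop :=
  ∀ (i : ℕ) (h : i < u.length), u.get ⟨i, h⟩ = w (k + i)

/-- `u` is a (finite) factor of the infinite word `w`. -/
def IsFactorInf {σ : Type*} (u : List σ) (w : ℕ → σ) : Prop :=
  ∃ k, OccursAt u w k

/-- An infinite word is recurrent if each of its factors occurs infinitely often in it. -/
def Recurrent {σ : Type*} (w : ℕ → σ) : Prop :=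
  ∀ (u : List σ) (k : ℕ), OccursAt u w k → ∀ N, ∃ m, N ≤ m ∧ OccursAt u w m

/-- `u` is a quasiperiod of the infinite word `w`: `u` is non-empty and there is a
sequence of prefixes `p n ++ u` of `w` with `p 0 = ε` and
`|p n| < |p (n+1)| ≤ |p n ++ u|`. -/
def IsQuasiperiod {A : Type*} (u : List A) (w : ℕ → A) : Prop :=
  u ≠ [] ∧ ∃ p : ℕ → List A, p 0 = [] ∧
    (∀ n, (p n).length < (p (n + 1)).length ∧
      (p (n + 1)).length ≤ (p n).length + u.length) ∧
    ∀ n, IsPref (p n ++ u) w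

/-- An infinite word is quasiperiodic if it has a quasiperiod. -/
def Quasiperiodic {A : Type*} (w : ℕ → A) : Prop := ∃ u, IsQuasiperiod u w

/-- A set `X` of finite words covers the infinite word `w`. -/
def CoveredBy {A : Type*} (X : Set (List A)) (w : ℕ → A) : Prop :=
  ∃ (p z : ℕ → List A), p 0 = [] ∧ (∀ n, z n ∈ X) ∧
    (∀ n, (p n).length < (p (n + 1)).length ∧
      (p (n + 1)).length ≤ (p n).length + (z n).length) ∧
    ∀ n, IsPref (p n ++ z n) w

/-- The morphism `L_a` : `a ↦ a`, `b ↦ ab` for `b ≠ a`. -/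
def Lm {A : Type*} [DecidableEq A] (a : A) (u : List A) : List A :=
  u.flatMap (fun b => if b = a then [a] else [a, b])

/-- The morphism `R_a` : `a ↦ a`, `b ↦ ba` for `b ≠ a`. -/
def Rm {A : Type*} [DecidableEq A] (a : A) (u : List A) : List A :=
  u.flatMap (fun b => if b = a then [a] else [b, a])

/-- The pure epistandard morphism `μ_v = L_{v_1} ∘ ⋯ ∘ L_{v_k}` for `v = v_1 ⋯ v_k`. -/
def muL {A : Type*} [DecidableEq A] (v : List A) (u : List A) : List A :=
  v.foldr Lm u

/-- The pure episturmian morphism `μ_{v̄} = R_{v_1} ∘ ⋯ ∘ R_{v_k}` for `v = v_1 ⋯ v_k`. -/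
def muR {A : Type*} [DecidableEq A] (v : List A) (u : List A) : List A :=
  v.foldr Rm u

/-- Spinned letters are elements of `A × Bool`: `(a, false)` is the `L`-spinned letter `a`
and `(a, true)` is the `R`-spinned letter `ā`.  `μ` on a spinned letter. -/
def muS {A : Type*} [DecidableEq A] (x : A × Bool) : List A → List A :=
  if x.2 then Rm x.1 else Lm x.1

/-- The pure episturmian morphism `μ_{w̆}` directed by the finite spinned word `w̆`. -/
def muW {A : Type*} [DecidableEq A] (w : List (A × Bool)) (u : List A) : List A :=
  w.foldr muS u

/-- `x` is the image of the infinite word `w` under the (letterwise) morphism whose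
image on the letter `a` is `f a` (all images being non-empty). -/
def SubstOf {A : Type*} (f : A → List A) (w x : ℕ → A) : Prop :=
  ∀ n, IsPref ((prefWord w n).flatMap f) x

/-- The spinned infinite word `Δ` directs the infinite word `t`: there is a sequence
`ts` of recurrent infinite words with `ts 0 = t` and `ts n = μ_{Δ n}(ts (n+1))`. -/
def Directs {A : Type*} [DecidableEq A] (Δ : ℕ → A × Bool) (t : ℕ → A) : Prop :=
  ∃ ts : ℕ → (ℕ → A), ts 0 = t ∧ (∀ n, Recurrent (ts n)) ∧
    ∀ n, SubstOf (fun a => muS (Δ n) [a]) (ts (n + 1)) (ts n)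

/-- An infinite word is episturmian iff it is directed by some spinned infinite word. -/
def Episturmian {A : Type*} [DecidableEq A] (t : ℕ → A) : Prop :=
  ∃ Δ : ℕ → A × Bool, Directs Δ t

/-- The palindromic right-closure `w⁽⁺⁾`: the shortest palindrome having `w` as a
prefix, obtained by appending the reverse of `w` deprived of its longest
palindromic suffix. -/
def palClosure {A : Type*} [DecidableEq A] (w : List A) : List A :=
  w ++ (w.take (w.length -
    Nat.findGreatest
      (fun k => (w.drop (w.length - k)).reverse = w.drop (w.length - k)) w.length)).reverse

/-- Iterated palindromic closure: `Pal ε = ε`, `Pal (w x) = (Pal w · x)⁽⁺⁾`. -/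
def Pal {A : Type*} [DecidableEq A] (w : List A) : List A :=
  w.foldl (fun p x => palClosure (p ++ [x])) []

/-- `s` is the epistandard word directed by `Δ`, i.e. `s = lim_n Pal(Δ_1 ⋯ Δ_n)`. -/
def IsEpistandardOf {A : Type*} [DecidableEq A] (Δ : ℕ → A) (s : ℕ → A) : Prop :=
  ∀ n, IsPref (Pal (prefWord Δ n)) s

/-- The concatenation of a finite word and an infinite word. -/
def catInf {σ : Type*} (u : List σ) (y : ℕ → σ) : ℕ → σ :=
  fun n => if h : n < u.length then u.get ⟨n, h⟩ else y (n - u.length)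

/-- Prepending a letter to an infinite word. -/
def consInf {σ : Type*} (a : σ) (w : ℕ → σ) : ℕ → σ :=
  fun n => match n with
  | 0 => a
  | Nat.succ k => w k

def UltimatelyPeriodic {A : Type*} (w : ℕ → A) : Prop :=
  ∃ p N : ℕ, 0 < p ∧ ∀ n, N ≤ n → w (n + p) = w n

/-- A factor `u` of `t` is right special if `ua`, `ub` are factors of `t` for two
distinct letters `a`, `b`. -/
def RightSpecial {A : Type*} (u : List A) (t : ℕ → A) : Prop :=
  ∃ a b : A, a ≠ b ∧ IsFactorInf (u ++ [a]) t ∧ IsFactorInf (u ++ [b]) t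

/-- The combinatorial definition of episturmian words: the set of factors is closed
under reversal, and there is at most one right special factor of each length. -/
def EpisturmianC {A : Type*} (t : ℕ → A) : Prop :=
  (∀ u : List A, IsFactorInf u t → IsFactorInf u.reverse t) ∧
  ∀ u v : List A, RightSpecial u t → RightSpecial v t → u.length = v.length → u = v

/-- The shifting factor `S_{w̆}` of `μ_{w̆}` (so that `μ_{w̆}(v) = S_{w̆}⁻¹ μ_w(v) S_{w̆}`):
`S_ε = ε`, `S_{a w̆} = L_a(S_{w̆})`, `S_{ā w̆} = L_a(S_{w̆}) a`. -/
def Sfac {A : Type*} [DecidableEq A] : List (A × Bool) → List A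
  | [] => []
  | x :: v => if x.2 then Lm x.1 (Sfac v) ++ [x.1] else Lm x.1 (Sfac v)

/-- A spinned infinite word is normalized if it contains infinitely many `L`-spinned
letters but no factor of the form `ā v̄ a` (`v̄` being `R`-spinned). -/
def NormalizedInf {A : Type*} (Δ : ℕ → A × Bool) : Prop :=
  (∀ N, ∃ n, N ≤ n ∧ (Δ n).2 = false) ∧
  ∀ (a : A) (i j : ℕ), i < j → Δ i = (a, true) →
    (∀ k, i < k → k < j → (Δ k).2 = true) → Δ j ≠ (a, false)

/-- A finite spinned word is normalized if it has no factor of the form `ā v̄ a`. -/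
def NormalizedFin {A : Type*} (u : List (A × Bool)) : Prop :=
  ¬ ∃ (a : A) (w1 w2 : List (A × Bool)) (z : List A),
      u = w1 ++ (a, true) :: (z.map (fun x => (x, true)) ++ (a, false) :: w2)

/-- Strict lexicographic order on infinite words induced by the order on letters. -/
def LexLt {A : Type*} [LinearOrder A] (x y : ℕ → A) : Prop :=
  ∃ n : ℕ, (∀ i, i < n → x i = y i) ∧ x n < y n

/-- An infinite word is an infinite Lyndon word if it is strictly lexicographically
smaller than each of its proper suffixes. -/
def InfLyndon {A : Type*} [LinearOrder A] (w : ℕ → A) : Prop :=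
  ∀ i : ℕ, 0 < i → LexLt w (fun n => w (n + i))

/-- A return to `v` in `w`: the segment of `w` between two consecutive occurrences
of `v`. -/
def IsReturn {σ : Type*} (v : List σ) (w : ℕ → σ) (r : List σ) : Prop :=
  ∃ k k' : ℕ, k < k' ∧ OccursAt v w k ∧ OccursAt v w k' ∧
    (∀ j, k < j → j < k' → ¬ OccursAt v w j) ∧
    r = List.ofFn (fun i : Fin (k' - k) => w (k + i))

/-- `u` is a quasiperiod of the finite word `z`: every position of `z` falls within
some occurrence of `u` in `z`. -/
def IsQuasiperiodFin {A : Type*} (u z : List A) : Prop :=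
  u ≠ [] ∧ ∀ i, i < z.length → ∃ k, k ≤ i ∧ i < k + u.length ∧ u <+: z.drop k


/-! ### Images of infinite words under `L_a` and `R_a` -/

/-- The suffix of `w` starting at position `i`. -/
def suff {σ : Type*} (i : ℕ) (w : ℕ → σ) : ℕ → σ := fun n => w (n + i)

/-- `p k` is the starting position of the image of the `k`-th letter of `w` under `L_a` or
`R_a`: both morphisms send `a` to one letter and any other letter to two letters. -/
structure Blk {A : Type*} (a : A) (w : ℕ → A) (p : ℕ → ℕ) : Prop where
  zero : p 0 = 0
  one : ∀ n, w n = a → p (n + 1) = p n + 1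
  two : ∀ n, w n ≠ a → p (n + 1) = p n + 2

/-- `x = L_a(w)`, the image of the `k`-th letter of `w` starting at position `p k`. -/
structure ImgL {A : Type*} (a : A) (w x : ℕ → A) (p : ℕ → ℕ) : Prop extends Blk a w p where
  hd : ∀ n, x (p n) = a
  tl : ∀ n, w n ≠ a → x (p n + 1) = w n

/-- `x = R_a(w)`, the image of the `k`-th letter of `w` starting at position `p k`. -/
structure ImgR {A : Type*} (a : A) (w x : ℕ → A) (p : ℕ → ℕ) : Prop extends Blk a w p where
  hd : ∀ n, x (p n) = w n
  tl : ∀ n, w n ≠ a → x (p n + 1) = a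

section images

variable {A : Type*} {a : A} {u v w x y : ℕ → A} {p q : ℕ → ℕ}

theorem Blk.lt_succ (h : Blk a w p) (n : ℕ) : p n < p (n + 1) := by
  by_cases hn : w n = a
  · have := h.one n hn; omega
  · have := h.two n hn; omega

theorem Blk.strictMono (h : Blk a w p) : StrictMono p := strictMono_nat_of_lt_succ h.lt_succ

theorem Blk.le (h : Blk a w p) (n : ℕ) : n ≤ p n := h.strictMono.le_apply

/-- Each position of the image lies in the block of exactly one letter. -/
theorem Blk.cover (h : Blk a w p) (i : ℕ) :
    ∃ k, k ≤ i ∧ (i = p k ∨ (w k ≠ a ∧ i = p k + 1)) := by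
  induction i with
  | zero => exact ⟨0, le_rfl, Or.inl h.zero.symm⟩
  | succ i ih =>
    obtain ⟨k, hk, hi | ⟨hw, hi⟩⟩ := ih
    · by_cases hw : w k = a
      · exact ⟨k + 1, by omega, Or.inl (by rw [h.one k hw, hi])⟩
      · exact ⟨k, by omega, Or.inr ⟨hw, by omega⟩⟩
    · exact ⟨k + 1, by omega, Or.inl (by rw [h.two k hw, hi])⟩

theorem Blk.suff (h : Blk a w p) (i : ℕ) : Blk a (suff i w) (fun n => p (n + i) - p i) where
  zero := by simp
  one n hn := by
    have := h.one (n + i) hn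
    have := h.strictMono.monotone (Nat.le_add_left i n)
    rw [Nat.add_right_comm n 1 i]; omega
  two n hn := by
    have := h.two (n + i) hn
    have := h.strictMono.monotone (Nat.le_add_left i n)
    rw [Nat.add_right_comm n 1 i]; omega

theorem ImgL.suff (h : ImgL a w x p) (i : ℕ) :
    ImgL a (suff i w) (suff (p i) x) (fun n => p (n + i) - p i) where
  toBlk := h.toBlk.suff i
  hd n := by
    have := h.strictMono.monotone (Nat.le_add_left i n)
    simp only [EpiQP.suff]
    rw [Nat.sub_add_cancel this, h.hd]
  tl n hn := by
    have := h.strictMono.monotone (Nat.le_add_left i n)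
    simp only [EpiQP.suff]
    rw [Nat.add_right_comm, Nat.sub_add_cancel this, h.tl _ hn]

theorem ImgR.suff (h : ImgR a w x p) (i : ℕ) :
    ImgR a (suff i w) (suff (p i) x) (fun n => p (n + i) - p i) where
  toBlk := h.toBlk.suff i
  hd n := by
    have := h.strictMono.monotone (Nat.le_add_left i n)
    simp only [EpiQP.suff]
    rw [Nat.sub_add_cancel this, h.hd]
  tl n hn := by
    have := h.strictMono.monotone (Nat.le_add_left i n)
    simp only [EpiQP.suff]
    rw [Nat.add_right_comm, Nat.sub_add_cancel this, h.tl _ hn]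

theorem Blk.eq_of_agree (h : Blk a u p) (h' : Blk a v q) {n : ℕ}
    (huv : ∀ i, i < n → u i = v i) : ∀ k, k ≤ n → p k = q k := by
  intro k hk
  induction k with
  | zero => rw [h.zero, h'.zero]
  | succ k ih =>
    have e := huv k hk
    have ih := ih (by omega)
    by_cases hu : u k = a
    · rw [h.one k hu, h'.one k (e ▸ hu), ih]
    · rw [h.two k hu, h'.two k (e ▸ hu), ih]

theorem ImgL.agree (h : ImgL a u x p) (h' : ImgL a v y q) {n : ℕ}
    (huv : ∀ i, i < n → u i = v i) : ∀ i, i < p n → x i = y i := by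
  intro i hi
  have hpq := h.toBlk.eq_of_agree h'.toBlk huv
  obtain ⟨k, -, hk⟩ := h.cover i
  have hkn : k < n := h.strictMono.lt_iff_lt.1 (by omega : p k < p n)
  obtain rfl | ⟨hu, rfl⟩ := hk
  · rw [h.hd, hpq k hkn.le, h'.hd]
  · rw [h.tl k hu, hpq k hkn.le, h'.tl k (huv k hkn ▸ hu), huv k hkn]

theorem ImgR.agree (h : ImgR a u x p) (h' : ImgR a v y q) {n : ℕ}
    (huv : ∀ i, i < n → u i = v i) : ∀ i, i < p n → x i = y i := by
  intro i hi
  have hpq := h.toBlk.eq_of_agree h'.toBlk huv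
  obtain ⟨k, -, hk⟩ := h.cover i
  have hkn : k < n := h.strictMono.lt_iff_lt.1 (by omega : p k < p n)
  obtain rfl | ⟨hu, rfl⟩ := hk
  · rw [h.hd, hpq k hkn.le, h'.hd, huv k hkn]
  · rw [h.tl k hu, hpq k hkn.le, h'.tl k (huv k hkn ▸ hu)]

theorem ImgL.ext (h : ImgL a u x p) (h' : ImgL a u y q) : x = y := by
  funext i
  exact h.agree h' (n := i + 1) (fun _ _ => rfl) i (h.le (i + 1))

theorem ImgR.ext (h : ImgR a u x p) (h' : ImgR a u y q) : x = y := by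
  funext i
  exact h.agree h' (n := i + 1) (fun _ _ => rfl) i (h.le (i + 1))

end images

/-! ### The lexicographic order -/

section order

variable {A : Type*} [LinearOrder A] {a : A} {u v w x y : ℕ → A} {p q : ℕ → ℕ}

theorem LexLt.irrefl (x : ℕ → A) : ¬ LexLt x x := fun ⟨_, _, h⟩ => lt_irrefl _ h

theorem LexLt.asymm (h : LexLt x y) : ¬ LexLt y x := by
  rintro ⟨n, h1, h2⟩
  obtain ⟨k, h3, h4⟩ := h
  rcases lt_trichotomy n k with hn | rfl | hn
  · rw [h3 n hn] at h2; exact lt_irrefl _ h2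
  · exact lt_asymm h2 h4
  · rw [h1 k hn] at h4; exact lt_irrefl _ h4

theorem LexLt.total (x y : ℕ → A) : LexLt x y ∨ x = y ∨ LexLt y x := by
  classical
  by_cases h : ∃ n, x n ≠ y n
  · have hlt : ∀ i, i < Nat.find h → x i = y i := fun i hi => by
      simpa using Nat.find_min h hi
    rcases lt_or_gt_of_ne (Nat.find_spec h) with h' | h'
    · exact Or.inl ⟨_, hlt, h'⟩
    · exact Or.inr (Or.inr ⟨_, fun i hi => (hlt i hi).symm, h'⟩)
  · push Not at h
    exact Or.inr (Or.inl (funext h))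

theorem LexLt.head (h : x 0 < y 0) : LexLt x y := ⟨0, fun i hi => absurd hi (by omega), h⟩

theorem InfLyndon.head_le (h : InfLyndon x) (i : ℕ) : x 0 ≤ x i := by
  rcases Nat.eq_zero_or_pos i with rfl | hi
  · exact le_rfl
  obtain ⟨n, h1, h2⟩ := h i hi
  rcases Nat.eq_zero_or_pos n with rfl | hn
  · simpa using h2.le
  · simpa using (h1 0 hn).le

/-- `L_a` is strictly increasing on words whose letters are all at least `a`. -/
theorem ImgL.lexLt (h : ImgL a u x p) (h' : ImgL a v y q) (ha : ∀ n, a ≤ u n)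
    (huv : LexLt u v) : LexLt x y := by
  obtain ⟨n, h1, h2⟩ := huv
  have hpq : p n = q n := h.toBlk.eq_of_agree h'.toBlk h1 n le_rfl
  have hv : v n ≠ a := ((ha n).trans_lt h2).ne'
  refine ⟨p n + 1, fun i hi => ?_, ?_⟩
  · rcases Nat.lt_succ_iff_lt_or_eq.1 hi with hi | rfl
    · exact h.agree h' h1 i hi
    · rw [h.hd, hpq, h'.hd]
  · rw [hpq, h'.tl n hv, ← hpq]
    by_cases hu : u n = a
    · rw [← h.one n hu, h.hd]; exact (ha n).trans_lt h2
    · rwa [h.tl n hu]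

/-- `R_a` is strictly increasing, since `R_a(b)` always begins with `b`. -/
theorem ImgR.lexLt (h : ImgR a u x p) (h' : ImgR a v y q) (huv : LexLt u v) : LexLt x y := by
  obtain ⟨n, h1, h2⟩ := huv
  have hpq : p n = q n := h.toBlk.eq_of_agree h'.toBlk h1 n le_rfl
  refine ⟨p n, h.agree h' h1, ?_⟩
  rw [h.hd, hpq, h'.hd]; exact h2

theorem ImgL.le_of_lyndon (h : ImgL a w x p) (hx : InfLyndon x) (n : ℕ) : a ≤ w n := by
  by_cases hn : w n = a
  · exact hn.ge
  · have := hx.head_le (p n + 1)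
    rwa [h.tl n hn, ← h.zero, h.hd] at this

/-- Desubstitution by `L_a` preserves the Lyndon property: as `L_a` is increasing here, a suffix
of `w` at most `w` would give a proper suffix of `x` at most `x`. -/
theorem ImgL.lyndon (h : ImgL a w x p) (hx : InfLyndon x) : InfLyndon w := by
  intro i hi
  have hle := h.le_of_lyndon hx
  have hlt : LexLt x (EpiQP.suff (p i) x) := hx (p i) (hi.trans_le (h.le i))
  rcases LexLt.total w (EpiQP.suff i w) with h1 | h1 | h1
  · exact h1
  · have hs := h.suff i
    rw [← h1] at hs
    rw [← h.ext hs] at hlt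
    exact absurd hlt (LexLt.irrefl x)
  · exact absurd ((h.suff i).lexLt h (fun n => hle _) h1) hlt.asymm

theorem ImgR.lyndon (h : ImgR a w x p) (hx : InfLyndon x) : InfLyndon w := by
  intro i hi
  have hlt : LexLt x (EpiQP.suff (p i) x) := hx (p i) (hi.trans_le (h.le i))
  rcases LexLt.total w (EpiQP.suff i w) with h1 | h1 | h1
  · exact h1
  · have hs := h.suff i
    rw [← h1] at hs
    rw [← h.ext hs] at hlt
    exact absurd hlt (LexLt.irrefl x)
  · exact absurd ((h.suff i).lexLt h h1) hlt.asymm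

end order

/-! ### Reading the block structure off `SubstOf` -/

section subst

variable {A : Type*} [DecidableEq A]

theorem prefWord_succ {σ : Type*} (w : ℕ → σ) (n : ℕ) :
    prefWord w (n + 1) = prefWord w n ++ [w n] := by
  simp only [prefWord]
  rw [List.ofFn_succ_last]
  simp

omit [DecidableEq A] in
theorem SubstOf.get {f : A → List A} {w x : ℕ → A} (h : SubstOf f w x) (n i : ℕ) {b : A}
    (hb : (f (w n))[i]? = some b) : x (((prefWord w n).flatMap f).length + i) = b := by
  obtain ⟨hi, hb⟩ := List.getElem?_eq_some_iff.1 hb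
  have := h (n + 1) (((prefWord w n).flatMap f).length + i)
    (by simp only [prefWord_succ, List.flatMap_append, List.length_append,
      List.flatMap_singleton]; omega)
  rw [← this, ← hb]
  simp [prefWord_succ]

theorem SubstOf.imgL {a : A} {w x : ℕ → A}
    (h : SubstOf (fun b => muS (a, false) [b]) w x) : ∃ p, ImgL a w x p := by
  have key : ∀ b : A, muS (a, false) [b] = if b = a then [a] else [a, b] := by
    intro b; simp [muS, Lm]
  refine ⟨fun n => ((prefWord w n).flatMap fun b => muS (a, false) [b]).length, ⟨?_, ?_, ?_⟩,
    ?_, ?_⟩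
  · simp [prefWord]
  · intro n hn
    simp only [prefWord_succ, List.flatMap_append, List.length_append, List.flatMap_singleton,
      key, hn, if_true, List.length_singleton]
  · intro n hn
    simp only [prefWord_succ, List.flatMap_append, List.length_append, List.flatMap_singleton,
      key, hn, if_false, List.length_cons, List.length_nil]
  · intro n
    exact h.get n 0 (by rw [key]; split_ifs <;> simp)
  · intro n hn
    exact h.get n 1 (by rw [key, if_neg hn]; simp)

theorem SubstOf.imgR {a : A} {w x : ℕ → A}
    (h : SubstOf (fun b => muS (a, true) [b]) w x) : ∃ p, ImgR a w x p := by
  have key : ∀ b : A, muS (a, true) [b] = if b = a then [a] else [b, a] := by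
    intro b; simp [muS, Rm]
  refine ⟨fun n => ((prefWord w n).flatMap fun b => muS (a, true) [b]).length, ⟨?_, ?_, ?_⟩,
    ?_, ?_⟩
  · simp [prefWord]
  · intro n hn
    simp only [prefWord_succ, List.flatMap_append, List.length_append, List.flatMap_singleton,
      key, hn, if_true, List.length_singleton]
  · intro n hn
    simp only [prefWord_succ, List.flatMap_append, List.length_append, List.flatMap_singleton,
      key, hn, if_false, List.length_cons, List.length_nil]
  · intro n
    exact h.get n 0 (by rw [key]; split_ifs with hn <;> simp [hn])
  · intro n hn
    exact h.get n 1 (by rw [key, if_neg hn]; simp)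

end subst

/-! ### Lyndon words and the sequence of first letters -/

/-- A desubstitution sequence for the spinned word `Δ`: the `n`-th word of `ts` is the image of
the next one under `L_a` or `R_a`, as prescribed by `Δ n`. -/
structure Desub {A : Type*} (Δ : ℕ → A × Bool) (ts : ℕ → ℕ → A) : Prop where
  left : ∀ n a, Δ n = (a, false) → ∃ p, ImgL a (ts (n + 1)) (ts n) p
  right : ∀ n a, Δ n = (a, true) → ∃ p, ImgR a (ts (n + 1)) (ts n) p

section desub

variable {A : Type*} {Δ : ℕ → A × Bool} {ts : ℕ → ℕ → A}

theorem Desub.head_left (h : Desub Δ ts) {n : ℕ} {a : A} (hn : Δ n = (a, false)) :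
    ts n 0 = a := by
  obtain ⟨p, hp⟩ := h.left n a hn
  rw [← hp.zero, hp.hd]

theorem Desub.head_right (h : Desub Δ ts) {n : ℕ} {a : A} (hn : Δ n = (a, true)) :
    ts n 0 = ts (n + 1) 0 := by
  obtain ⟨p, hp⟩ := h.right n a hn
  rw [← hp.hd 0, hp.zero]

theorem spin_cases (Δ : ℕ → A × Bool) (n : ℕ) :
    (∃ a, Δ n = (a, false)) ∨ ∃ a, Δ n = (a, true) := by
  rcases h : Δ n with ⟨a, _ | _⟩
  · exact Or.inl ⟨a, rfl⟩
  · exact Or.inr ⟨a, rfl⟩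

/-- Along a run of `R`-spinned letters the first letter does not change. -/
theorem Desub.head_run (h : Desub Δ ts) {i j : ℕ} (hij : i ≤ j)
    (hR : ∀ k, i ≤ k → k < j → (Δ k).2 = true) : ts i 0 = ts j 0 := by
  induction j, hij using Nat.le_induction with
  | base => rfl
  | succ j hj ih =>
    rw [ih fun k h1 h2 => hR k h1 (by omega)]
    exact h.head_right (a := (Δ j).1) (Prod.ext rfl (hR j hj (by omega)))

/-- Normalization excludes `ā` when the word begins with `a`. -/
theorem Desub.head_ne (h : Desub Δ ts) (hnorm : NormalizedInf Δ) {n : ℕ} {a : A}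
    (hn : Δ n = (a, true)) : ts n 0 ≠ a := by
  classical
  intro he
  have hex := hnorm.1 (n + 1)
  obtain ⟨h1, h2⟩ := Nat.find_spec hex
  have hrun : ∀ k, n < k → k < Nat.find hex → (Δ k).2 = true := fun k hk hk' => by
    have := Nat.find_min hex hk'
    simpa [Nat.succ_le_of_lt hk] using this
  refine hnorm.2 a n (Nat.find hex) (by omega) hn hrun (Prod.ext ?_ h2)
  have hk : Δ (Nat.find hex) = ((Δ (Nat.find hex)).1, false) := Prod.ext rfl h2
  rw [← h.head_left hk, ← h.head_run (i := n + 1) h1 fun k hk hk' => hrun k hk hk',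
    ← h.head_right hn, he]

/-- If only `L_a` is applied from step `N` on, the words are `a a a ⋯`: a letter other than `a`
would sit at a strictly smaller position after each desubstitution. -/
theorem Desub.const (h : Desub Δ ts) {a : A} {N : ℕ} (hN : ∀ n, N ≤ n → Δ n = (a, false)) :
    ∀ i n, N ≤ n → ts n i = a := by
  intro i
  induction i using Nat.strong_induction_on with
  | _ i ih =>
    intro n hn
    obtain ⟨p, hp⟩ := h.left n a (hN n hn)
    have hpk : ∀ k, k ≤ i → p k = k := by
      intro k hk
      induction k with
      | zero => exact hp.zero
      | succ k ihk => rw [hp.one k (ih k hk (n + 1) (by omega)), ihk (by omega)]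
    obtain ⟨k, hk, hik | ⟨hw, hik⟩⟩ := hp.cover i
    · rw [hik, hp.hd]
    · rw [hpk k hk] at hik
      exact absurd (ih k (by omega) (n + 1) (by omega)) hw

variable [LinearOrder A]

/-- The condition on directive word and first letters that characterizes Lyndon words: the first
letters are nondecreasing, each `R`-spinned letter exceeds the first letter at its step, and there
are infinitely many `R`-spinned letters. -/
structure Good (Δ : ℕ → A × Bool) (f : ℕ → A) : Prop where
  gt : ∀ n a, Δ n = (a, true) → f n < a
  mono : ∀ n, f n ≤ f (n + 1)
  inf : ∀ N, ∃ n, N ≤ n ∧ (Δ n).2 = true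

/-- A Lyndon word begins with its least letter, and all desubstituted words are again Lyndon. -/
theorem Desub.good [Finite A] (h : Desub Δ ts) (hnorm : NormalizedInf Δ)
    (hl : InfLyndon (ts 0)) : Good Δ (fun n => ts n 0) := by
  have hall : ∀ n, InfLyndon (ts n) := by
    intro n
    induction n with
    | zero => exact hl
    | succ n ih =>
      obtain ⟨a, ha⟩ | ⟨a, ha⟩ := spin_cases Δ n
      · obtain ⟨p, hp⟩ := h.left n a ha
        exact hp.lyndon ih
      · obtain ⟨p, hp⟩ := h.right n a ha
        exact hp.lyndon ih
  have hmono : ∀ n, ts n 0 ≤ ts (n + 1) 0 := by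
    intro n
    obtain ⟨a, ha⟩ | ⟨a, ha⟩ := spin_cases Δ n
    · rw [h.head_left ha]
      obtain ⟨p, hp⟩ := h.left n a ha
      exact hp.le_of_lyndon (hall n) 0
    · exact (h.head_right ha).le
  refine ⟨?_, hmono, ?_⟩
  · intro n a ha
    have hne := h.head_ne hnorm ha
    refine lt_of_le_of_ne ?_ hne
    obtain ⟨p, hp⟩ := h.right n a ha
    have h1 := hp.tl 0 (by rwa [← h.head_right ha])
    rw [← h1]
    exact (hall n).head_le _
  · intro N
    by_contra hcon
    push Not at hcon
    obtain ⟨M, hM⟩ := WellFoundedGT.monotone_chain_condition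
      (⟨fun n => ts n 0, monotone_nat_of_le_succ hmono⟩ : ℕ →o A)
    have hc := h.const (a := ts M 0) (N := max M N) fun n hn => by
      have h2 : Δ n = ((Δ n).1, false) :=
        Prod.ext rfl (by simpa using hcon n (le_of_max_le_right hn))
      have h3 : ts M 0 = ts n 0 := hM n (le_of_max_le_left hn)
      rw [h2, h3, h.head_left h2]
    obtain ⟨n, -, hn⟩ := hall (max M N) 1 one_pos
    simp only [hc _ _ le_rfl] at hn
    exact lt_irrefl _ hn

omit [LinearOrder A] in
/-- Induction along desubstitution: positions never increase, and they decrease strictly at each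
of the infinitely many `R`-steps. -/
theorem desub_induction {P : ℕ → ℕ → Prop} (inf : ∀ N, ∃ n, N ≤ n ∧ (Δ n).2 = true)
    (hR : ∀ i n a, Δ n = (a, true) → (∀ k, k < i → P k (n + 1)) → P i n)
    (hL : ∀ i n a, Δ n = (a, false) → (∀ k, k ≤ i → P k (n + 1)) → P i n) :
    ∀ i n, P i n := by
  intro i
  induction i using Nat.strong_induction_on with
  | _ i ih =>
    have key : ∀ d n, (Δ (n + d)).2 = true → P i n := by
      intro d
      induction d with
      | zero => exact fun n hn => hR i n (Δ n).1 (Prod.ext rfl hn) fun k hk => ih k hk _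
      | succ d ihd =>
        intro n hn
        obtain ⟨a, ha⟩ | ⟨a, ha⟩ := spin_cases Δ n
        · refine hL i n a ha fun k hk => ?_
          rcases hk.lt_or_eq with hk | rfl
          · exact ih k hk _
          · exact ihd (n + 1) (by rwa [Nat.add_right_comm])
        · exact hR i n a ha fun k hk => ih k hk _
    intro n
    obtain ⟨N, h1, h2⟩ := inf n
    exact key (N - n) n (by rwa [Nat.add_sub_cancel' h1])

/-- At an `R`-step satisfying the condition, a block start at a positive position comes from a
strictly smaller position. -/
theorem Good.pos_lt {a : A} {n k : ℕ} {p : ℕ → ℕ} (h : Desub Δ ts)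
    (hg : Good Δ (fun n => ts n 0)) (ha : Δ n = (a, true))
    (hp : ImgR a (ts (n + 1)) (ts n) p) (hk : 0 < k) : k < p k := by
  have h0 : ts (n + 1) 0 ≠ a := by
    rw [← h.head_right ha]; exact (hg.gt n a ha).ne
  have h1 := hp.two 0 h0
  rw [hp.zero, zero_add, zero_add] at h1
  induction k, hk using Nat.le_induction with
  | base => exact h1 ▸ one_lt_two
  | succ k hk ih => exact lt_of_le_of_lt ih (hp.lt_succ k)

theorem Good.head_le (h : Desub Δ ts) (hg : Good Δ (fun n => ts n 0)) :
    ∀ i n, ts n 0 ≤ ts n i := by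
  refine desub_induction hg.inf ?_ ?_
  · intro i n a ha ih
    obtain ⟨p, hp⟩ := h.right n a ha
    obtain ⟨k, -, rfl | ⟨hw, rfl⟩⟩ := hp.cover i
    · rcases Nat.eq_zero_or_pos k with rfl | hk
      · rw [hp.zero]
      · rw [hp.hd, h.head_right ha]
        exact ih k (hg.pos_lt h ha hp hk)
    · rw [hp.tl k hw]; exact (hg.gt n a ha).le
  · intro i n a ha ih
    obtain ⟨p, hp⟩ := h.left n a ha
    obtain ⟨k, hki, rfl | ⟨hw, rfl⟩⟩ := hp.cover i
    · rw [hp.hd, h.head_left ha]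
    · rw [hp.tl k hw]
      exact (hg.mono n).trans (ih k hki)

/-- A proper suffix either begins inside the image of a letter, with a letter larger than the first
one, or is the image of a suffix of the desubstituted word at no larger a position. -/
theorem Good.lyndon (h : Desub Δ ts) (hg : Good Δ (fun n => ts n 0)) : InfLyndon (ts 0) := by
  suffices H : ∀ i n, 0 < i → LexLt (ts n) (suff i (ts n)) from fun i hi => H i 0 hi
  have hle := hg.head_le h
  refine desub_induction hg.inf ?_ ?_
  · intro i n a ha ih hi
    obtain ⟨p, hp⟩ := h.right n a ha
    obtain ⟨k, -, rfl | ⟨hw, rfl⟩⟩ := hp.cover i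
    · have hk : 0 < k := Nat.pos_of_ne_zero fun h0 => by
        rw [h0, hp.zero] at hi; exact lt_irrefl _ hi
      exact hp.lexLt (hp.suff k) (ih k (hg.pos_lt h ha hp hk) hk)
    · apply LexLt.head
      simp only [suff, zero_add]
      rw [hp.tl k hw]; exact hg.gt n a ha
  · intro i n a ha ih hi
    obtain ⟨p, hp⟩ := h.left n a ha
    have hal : ∀ k, a ≤ ts (n + 1) k := fun k => by
      rw [← h.head_left ha]; exact (hg.mono n).trans (hle k (n + 1))
    obtain ⟨k, hki, rfl | ⟨hw, rfl⟩⟩ := hp.cover i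
    · have hk : 0 < k := Nat.pos_of_ne_zero fun h0 => by
        rw [h0, hp.zero] at hi; exact lt_irrefl _ hi
      exact hp.lexLt (hp.suff k) hal (ih k hki hk)
    · apply LexLt.head
      simp only [suff, zero_add]
      rw [hp.tl k hw, h.head_left ha]
      exact lt_of_le_of_ne (hal k) (Ne.symm hw)

end desub

/-! ### From the product form to the condition on first letters -/

/-- `f` is the sequence of first letters along a desubstitution: by an `L`-spinned letter it is
determined, by an `R`-spinned letter it is left unchanged. -/
structure Heads {A : Type*} (Δ : ℕ → A × Bool) (f : ℕ → A) : Prop where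
  left : ∀ n a, Δ n = (a, false) → f n = a
  right : ∀ n a, Δ n = (a, true) → f n = f (n + 1)

/-- The first letter `hdL u c` of a word directed by `u ⋯` whose desubstitution along `u` begins
with `c`: the first `L`-spinned letter of `u`, or `c` if there is none. -/
def hdL {A : Type*} : List (A × Bool) → A → A
  | [], c => c
  | (_, true) :: u, c => hdL u c
  | (x, false) :: _, _ => x

/-- The finite analogue of `Good` for a spinned word `u` followed by first letter `c`. -/
def GoodL {A : Type*} [LinearOrder A] : List (A × Bool) → A → Prop
  | [], _ => True
  | (x, true) :: u, c => hdL u c < x ∧ GoodL u c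
  | (x, false) :: u, c => x ≤ hdL u c ∧ GoodL u c

section combinatorics

variable {A : Type*}

theorem hdL_append (u v : List (A × Bool)) (c : A) : hdL (u ++ v) c = hdL u (hdL v c) := by
  induction u with
  | nil => rfl
  | cons y u ih => rcases y with ⟨x, _ | _⟩ <;> simp [hdL, ih]

theorem hdL_map (z : List A) (c : A) : hdL (z.map fun x => (x, true)) c = c := by
  induction z with
  | nil => rfl
  | cons x z ih => simpa [hdL] using ih

theorem hdL_replicate {p : ℕ} (hp : 1 ≤ p) (a c : A) :
    hdL (List.replicate p (a, false)) c = a := by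
  obtain ⟨p, rfl⟩ := Nat.exists_eq_add_of_le' hp
  rfl

section

variable [LinearOrder A]

theorem goodL_append (u v : List (A × Bool)) (c : A) :
    GoodL (u ++ v) c ↔ GoodL u (hdL v c) ∧ GoodL v c := by
  induction u with
  | nil => simp [GoodL]
  | cons y u ih => rcases y with ⟨x, _ | _⟩ <;> simp [GoodL, hdL_append, ih, and_assoc]

theorem goodL_map {z : List A} {c : A} (hz : ∀ x ∈ z, c < x) :
    GoodL (z.map fun x => (x, true)) c := by
  induction z with
  | nil => trivial
  | cons x z ih =>
    refine ⟨?_, ih fun y hy => hz y (List.mem_cons_of_mem _ hy)⟩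
    rw [hdL_map]
    exact hz x List.mem_cons_self

theorem goodL_replicate (p : ℕ) {a c : A} (h : a ≤ c) :
    GoodL (List.replicate p (a, false)) c := by
  induction p with
  | zero => trivial
  | succ p ih =>
    refine ⟨?_, ih⟩
    rcases Nat.eq_zero_or_pos p with rfl | hp
    · exact h
    · exact (hdL_replicate hp a c).ge

theorem goodL_block {z : List A} {a c : A} (p : ℕ) (hp : 1 ≤ p) (hz : ∀ x ∈ z, a < x)
    (h : a ≤ c) :
    GoodL (z.map (fun x => (x, true)) ++ List.replicate p (a, false)) c ∧
      hdL (z.map (fun x => (x, true)) ++ List.replicate p (a, false)) c = a := by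
  rw [goodL_append, hdL_append, hdL_replicate hp, hdL_map]
  exact ⟨⟨goodL_map hz, goodL_replicate p h⟩, rfl⟩

theorem goodL_level (bs : List (List A)) {a c : A} (hz : ∀ z ∈ bs, ∀ x ∈ z, a < x)
    (h : a ≤ c) :
    GoodL (bs.map fun z => z.map (fun x => (x, true)) ++ [(a, false)]).flatten c ∧
      a ≤ hdL (bs.map fun z => z.map (fun x => (x, true)) ++ [(a, false)]).flatten c := by
  induction bs with
  | nil => exact ⟨trivial, h⟩
  | cons z bs ih =>
    obtain ⟨h1, h2⟩ := ih fun z' hz' => hz z' (List.mem_cons_of_mem _ hz')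
    have h3 := goodL_block 1 le_rfl (hz z List.mem_cons_self) h2
    simp only [List.replicate_one] at h3
    rw [List.map_cons, List.flatten_cons, goodL_append, hdL_append]
    exact ⟨⟨h3.1, h1⟩, h3.2.ge⟩

theorem OccursAt.right_of_append {σ : Type*} {u v : List σ} {w : ℕ → σ} {k : ℕ}
    (h : OccursAt (u ++ v) w k) : OccursAt v w (k + u.length) := fun i hi => by
  have := h (u.length + i) (by rw [List.length_append]; omega)
  rw [Nat.add_assoc, ← this]
  simp

omit [LinearOrder A] in
/-- The first letter at `n` computed from the factor `u` of `Δ` at `n` and the first letter after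
it. -/
theorem Heads.eq_hdL {Δ : ℕ → A × Bool} {f : ℕ → A} (h : Heads Δ f) (u : List (A × Bool)) :
    ∀ n, OccursAt u Δ n → f n = hdL u (f (n + u.length)) := by
  induction u with
  | nil => intro n _; rfl
  | cons y u ih =>
    intro n hu
    have h0 : y = Δ n := hu 0 (by simp)
    have h1 : OccursAt u Δ (n + 1) := fun i hi => by
      have := hu (i + 1) (by simpa using hi)
      rw [Nat.add_right_comm, Nat.add_assoc, ← this]; rfl
    have h2 := ih (n + 1) h1
    rw [List.length_cons, ← Nat.add_assoc, Nat.add_right_comm]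
    rcases y with ⟨x, _ | _⟩
    · exact h.left n x h0.symm
    · rw [h.right n x h0.symm, h2]; rfl

/-- `GoodL` for a factor of `Δ`, read with the first letter that follows it, gives the conditions
of `Good` at every position of that factor. -/
theorem Heads.good_of_goodL {Δ : ℕ → A × Bool} {f : ℕ → A} (h : Heads Δ f)
    (u : List (A × Bool)) :
    ∀ n, OccursAt u Δ n → GoodL u (f (n + u.length)) → ∀ i, i < u.length →
      (∀ a, Δ (n + i) = (a, true) → f (n + i) < a) ∧ f (n + i) ≤ f (n + i + 1) := by
  induction u with
  | nil => intro n _ _ i hi; simp at hi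
  | cons y u ih =>
    intro n hu hg i hi
    have h0 : y = Δ n := hu 0 (by simp)
    have h1 : OccursAt u Δ (n + 1) := fun i hi => by
      have := hu (i + 1) (by simpa using hi)
      rw [Nat.add_right_comm, Nat.add_assoc, ← this]; rfl
    have h2 := h.eq_hdL u (n + 1) h1
    rw [List.length_cons, ← Nat.add_assoc, Nat.add_right_comm] at hg
    have hg' : GoodL u (f (n + 1 + u.length)) := by
      rcases y with ⟨x, _ | _⟩ <;> exact hg.2
    rcases i with _ | i
    · rcases y with ⟨x, _ | _⟩
      · have hh : x ≤ _ := hg.1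
        rw [← h2] at hh
        refine ⟨fun a ha => ?_, ?_⟩
        · rw [Nat.add_zero, ← h0] at ha; simp at ha
        · rw [Nat.add_zero, h.left n x h0.symm]; exact hh
      · have hh : _ < x := hg.1
        rw [← h2] at hh
        have h3 := h.right n x h0.symm
        refine ⟨fun a ha => ?_, h3.le⟩
        rw [Nat.add_zero, ← h0] at ha
        obtain rfl : x = a := (Prod.ext_iff.1 ha).1
        rw [Nat.add_zero, h3]; exact hh
    · have := ih (n + 1) h1 hg' i (by simpa using hi)
      rwa [Nat.add_right_comm, Nat.add_assoc] at this

end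

/-! ### Cutting the directive word into segments -/

/-- The factor of `Δ` on the half-open interval of positions `[s, t)`. -/
def seg {σ : Type*} (Δ : ℕ → σ) (s t : ℕ) : List σ := (List.range' s (t - s)).map Δ

theorem seg_self {σ : Type*} (Δ : ℕ → σ) (s : ℕ) : seg Δ s s = [] := by simp [seg]

theorem seg_append {σ : Type*} (Δ : ℕ → σ) {s t u : ℕ} (h1 : s ≤ t) (h2 : t ≤ u) :
    seg Δ s t ++ seg Δ t u = seg Δ s u := by
  rw [seg, seg, seg, ← List.map_append]
  have := @List.range'_append_1 s (t - s) (u - t)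
  rw [show s + (t - s) = t by omega, show t - s + (u - t) = u - s by omega] at this
  rw [this]

theorem seg_cons {σ : Type*} (Δ : ℕ → σ) {s t : ℕ} (h : s < t) :
    seg Δ s t = Δ s :: seg Δ (s + 1) t := by
  rw [← seg_append Δ (Nat.le_succ s) h, seg, Nat.succ_sub (le_refl s), Nat.sub_self]
  rfl

theorem isPref_seg {σ : Type*} (Δ : ℕ → σ) (t : ℕ) : IsPref (seg Δ 0 t) Δ := by
  intro i hi
  simp [seg]

theorem flatten_seg {σ : Type*} (Δ : ℕ → σ) {g : ℕ → ℕ} (hg : Monotone g) (n : ℕ) :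
    ((List.range n).map fun k => seg Δ (g k) (g (k + 1))).flatten = seg Δ (g 0) (g n) := by
  induction n with
  | zero => simp [seg_self]
  | succ n ih =>
    rw [List.range_succ, List.map_append, List.flatten_append, ih]
    simp [seg_append Δ (hg (Nat.zero_le n)) (hg (Nat.le_succ n))]

theorem seg_right {Δ : ℕ → A × Bool} {s t : ℕ}
    (h : ∀ i, s ≤ i → i < t → (Δ i).2 = true) :
    seg Δ s t = ((seg Δ s t).map Prod.fst).map fun x => (x, true) := by
  rw [List.map_map]
  conv_lhs => rw [← List.map_id (seg Δ s t)]
  refine List.map_congr_left fun y hy => ?_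
  simp only [seg, List.mem_map, List.mem_range'_1] at hy
  obtain ⟨i, ⟨h1, h2⟩, rfl⟩ := hy
  exact Prod.ext rfl (h i h1 (by omega))

theorem seg_left {Δ : ℕ → A × Bool} {s t : ℕ} {a : A}
    (h : ∀ i, s ≤ i → i < t → Δ i = (a, false)) :
    seg Δ s t = List.replicate (t - s) (a, false) := by
  refine List.eq_replicate_iff.2 ⟨by simp [seg], fun y hy => ?_⟩
  simp only [seg, List.mem_map, List.mem_range'_1] at hy
  obtain ⟨i, ⟨h1, h2⟩, rfl⟩ := hy
  exact h i h1 (by omega)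

/-- A segment made of `L`-spinned `a` and `R`-spinned letters in `Q`, which is empty or ends with
the `L`-spinned `a`, is a product of blocks in `Q̄* a`. -/
theorem seg_level {Δ : ℕ → A × Bool} {a : A} {Q : A → Prop} (t : ℕ) :
    ∀ d s, s + d = t → (∀ i, s ≤ i → i < t → Δ i = (a, false) ∨ ∃ x, Q x ∧ Δ i = (x, true)) →
      (s < t → Δ (t - 1) = (a, false)) →
      ∃ bs : List (List A), (∀ z ∈ bs, ∀ x ∈ z, Q x) ∧
        seg Δ s t = (bs.map fun z => z.map (fun x => (x, true)) ++ [(a, false)]).flatten := by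
  intro d
  induction d with
  | zero => rintro s rfl - -; exact ⟨[], by simp, by simp [seg_self]⟩
  | succ d ih =>
    intro s hs hall hlast
    have hst : s < t := by omega
    obtain ⟨bs, h1, h2⟩ := ih (s + 1) (by omega) (fun i hi => hall i (by omega))
      (fun _ => hlast hst)
    rw [seg_cons Δ hst, h2]
    rcases hall s le_rfl hst with h3 | ⟨x, hx, h3⟩
    · exact ⟨[] :: bs, by simpa using h1, by simp [h3]⟩
    · rcases bs with _ | ⟨z, bs⟩
      · -- an empty remainder would make the `R`-spinned letter at `s` the last one
        exfalso
        have h4 : (seg Δ (s + 1) t).length = 0 := by rw [h2]; rfl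
        simp only [seg, List.length_map, List.length_range'] at h4
        have h5 := hlast hst
        rw [show t - 1 = s by omega, h3] at h5
        simp at h5
      · refine ⟨(x :: z) :: bs, ?_, by simp [h3]⟩
        intro z' hz' y hy
        rcases List.mem_cons.1 hz' with rfl | hz'
        · rcases List.mem_cons.1 hy with rfl | hy
          · exact hx
          · exact h1 z List.mem_cons_self y hy
        · exact h1 z' (List.mem_cons_of_mem _ hz') y hy

/-- The first position at or after `N` where the spin is `b`. -/
theorem exists_first {Δ : ℕ → A × Bool} {b : Bool} (h : ∀ N, ∃ n, N ≤ n ∧ (Δ n).2 = b)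
    (N : ℕ) : ∃ n, N ≤ n ∧ (Δ n).2 = b ∧ ∀ i, N ≤ i → i < n → (Δ i).2 ≠ b := by
  classical
  obtain ⟨h1, h2⟩ := Nat.find_spec (h N)
  exact ⟨Nat.find (h N), h1, h2, fun i hi hlt hb => Nat.find_min (h N) hlt ⟨hi, hb⟩⟩

end combinatorics

/-! ### The characterization -/

/-- characterization of episturmian Lyndon words.  Here `A` is
identified with `{a₁ < a₂ < ⋯ < a_m}` via the order isomorphism `e` (so
`a_k = e (k-1)` and `B_i = {a_i, …, a_m} = {x | i - 1 ≤ rank x}` where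
`rank x = e.symm x`).  An episturmian word `w` with normalized directive word `Δ`
is an infinite Lyndon word iff for some `1 ≤ j < m`, `Δ` belongs to
`(B̄₂* a₁)* ⋯ (B̄_{j+1}* a_j)* (B̄_{j+1}⁺ {a_j}⁺)^ω`. -/
theorem episturmian_lyndon_characterization
    {A : Type*} [Fintype A] [LinearOrder A] [DecidableEq A] {m : ℕ} (hm : 2 ≤ m)
    (e : Fin m ≃o A)
    (w : ℕ → A) (hw : Episturmian w)
    (Δ : ℕ → A × Bool) (hdir : Directs Δ w) (hnorm : NormalizedInf Δ) :
    InfLyndon w ↔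
      ∃ j : Fin m, 1 ≤ (j : ℕ) ∧
        ∃ (ps : ℕ → List (A × Bool)) (bl : ℕ → List (A × Bool)),
          -- for each level `1 ≤ k ≤ j`, `ps k` is an element of `(B̄_{k+1}* a_k)*`
          (∀ (k : ℕ) (hk1 : 1 ≤ k) (hk2 : k ≤ (j : ℕ)),
            ∃ bs : List (List A),
              (∀ z ∈ bs, ∀ x ∈ z, k ≤ ((e.symm x : Fin m) : ℕ)) ∧
              ps k = (bs.map (fun z => z.map (fun x => (x, true)) ++
                [(e ⟨k - 1, lt_of_le_of_lt (le_trans (Nat.sub_le k 1) hk2) j.isLt⟩,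
                  false)])).flatten) ∧
          -- each `bl n` is an element of `B̄_{j+1}⁺ {a_j}⁺`
          (∀ n : ℕ, ∃ (z : List A) (p : ℕ),
              z ≠ [] ∧ (∀ x ∈ z, (j : ℕ) ≤ ((e.symm x : Fin m) : ℕ)) ∧ 1 ≤ p ∧
              bl n = z.map (fun x => (x, true)) ++
                List.replicate p
                  (e ⟨(j : ℕ) - 1, lt_of_le_of_lt (Nat.sub_le (j : ℕ) 1) j.isLt⟩,
                    false)) ∧
          -- `Δ = ps 1 ⋯ ps j · bl 0 · bl 1 · bl 2 ⋯`
          (∀ n : ℕ, IsPref ((((List.range (j : ℕ)).map (fun k => ps (k + 1))).flatten)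
              ++ ((List.range n).map bl).flatten) Δ) := by
  obtain ⟨ts, h0, -, hts⟩ := hdir
  have hD : Desub Δ ts :=
    ⟨fun n a ha => SubstOf.imgL (ha ▸ hts n), fun n a ha => SubstOf.imgR (ha ▸ hts n)⟩
  have hH : Heads Δ (fun n => ts n 0) :=
    ⟨fun n a ha => hD.head_left ha, fun n a ha => hD.head_right ha⟩
  have hlt : ∀ (k : ℕ) (hk : k - 1 < m) (x : A), 1 ≤ k →
      (e ⟨k - 1, hk⟩ < x ↔ k ≤ ((e.symm x : Fin m) : ℕ)) := by
    intro k hk x hk1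
    rw [← e.lt_symm_apply, Fin.lt_def]
    simp only
    omega
  have hle : ∀ (k : ℕ) (hk : k - 1 < m) (x : A),
      (e ⟨k - 1, hk⟩ ≤ x ↔ k - 1 ≤ ((e.symm x : Fin m) : ℕ)) := by
    intro k hk x
    rw [← e.le_symm_apply, Fin.le_def]
  rw [← h0]
  constructor
  · intro hl
    have hfin : Finite A := Finite.of_equiv _ e.toEquiv
    have hg := hD.good hnorm hl
    generalize (fun n => ts n 0) = f at hH hg
    have hmono : Monotone f := monotone_nat_of_le_succ hg.mono
    obtain ⟨M, hM⟩ := WellFoundedGT.monotone_chain_condition (⟨f, hmono⟩ : ℕ →o A)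
    replace hM : ∀ n, M ≤ n → f M = f n := hM
    set r : ℕ → ℕ := fun n => ((e.symm (f n) : Fin m) : ℕ) with hr
    have hrmono : Monotone r := fun i k h => e.symm.monotone (hmono h)
    have her : ∀ n k (hk : k < m), r n = k → e ⟨k, hk⟩ = f n := by
      rintro n k hk rfl
      simp [hr]
    have hrx : ∀ n x, f n < x → r n < ((e.symm x : Fin m) : ℕ) := fun n x h =>
      e.symm.strictMono h
    have hrM : ∀ n, r n ≤ r M := fun n => by
      rcases le_total n M with h | h
      · exact hrmono h
      · simp only [hr]; rw [← hM n h]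
    -- the level is below the top one since some `R`-spinned letter exceeds the final first letter
    have hJ : r M + 1 < m := by
      obtain ⟨n, hn, h2⟩ := hg.inf M
      have h3 := hrx n (Δ n).1 (hg.gt n _ (Prod.ext rfl h2))
      have h4 : r M ≤ r n := hrmono hn
      have := (e.symm (Δ n).1).isLt
      omega
    have hT0 : ∀ k, ∃ n, k ≤ r M → k ≤ r n ∧ ∀ i, i < n → r i < k := by
      classical
      intro k
      by_cases hk : k ≤ r M
      · have hex : ∃ n, k ≤ r n := ⟨M, hk⟩
        exact ⟨Nat.find hex, fun _ => ⟨Nat.find_spec hex, fun i hi => by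
          simpa using Nat.find_min hex hi⟩⟩
      · exact ⟨0, fun h => absurd h hk⟩
    choose T0 hT0 using hT0
    obtain ⟨N, hN1, hN2, hN3⟩ := exists_first hg.inf (T0 (r M))
    -- the boundaries of the levels: level `k` ends where the first letter gets rank `k`, and the
    -- last level is cut at its first `R`-spinned letter
    set T : ℕ → ℕ := fun k => if k ≤ r M then T0 k else N with hT
    have hTle : ∀ k, k ≤ r M → T k = T0 k := fun k hk => if_pos hk
    have hTgt : ∀ k, r M < k → T k = N := fun k hk => if_neg (by omega)
    have hTz : T 0 = 0 := by
      rw [hTle 0 (Nat.zero_le _)]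
      by_contra h
      exact absurd ((hT0 0 (Nat.zero_le _)).2 0 (Nat.pos_of_ne_zero h)) (Nat.not_lt_zero _)
    have hTmono : Monotone T := by
      refine monotone_nat_of_le_succ fun k => ?_
      rcases lt_trichotomy k (r M) with hk | hk | hk
      · rw [hTle k hk.le, hTle (k + 1) hk]
        by_contra! h
        have h1 := (hT0 k hk.le).2 _ h
        have h2 := (hT0 (k + 1) hk).1
        omega
      · rw [hTle k hk.le, hTgt (k + 1) (by omega), hk]; exact hN1
      · rw [hTgt k hk, hTgt (k + 1) (by omega)]
    have hend : ∀ n, N ≤ n → r n = r M := fun n hn => by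
      have h1 := (hT0 (r M) le_rfl).1
      have h2 : r (T0 (r M)) ≤ r n := hrmono (hN1.trans hn)
      have h3 := hrM n
      omega
    have hfend : ∀ n, N ≤ n → ∀ hj : r M < m, f n = e ⟨r M, hj⟩ := fun n hn hj =>
      (her n _ hj (hend n hn)).symm
    have hstep : ∀ n, ∃ n', N ≤ n → (Δ n).2 = true → n < n' ∧ (Δ n').2 = true ∧
        ∃ (z : List A) (p : ℕ), z ≠ [] ∧ (∀ x ∈ z, r M + 1 ≤ ((e.symm x : Fin m) : ℕ)) ∧
          1 ≤ p ∧ seg Δ n n' = z.map (fun x => (x, true)) ++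
            List.replicate p (e ⟨r M, by omega⟩, false) := by
      intro n
      obtain ⟨l, hl1, hl2, hl3⟩ := exists_first hnorm.1 n
      obtain ⟨n', hn1, hn2, hn3⟩ := exists_first hg.inf l
      refine ⟨n', fun hn hnR => ?_⟩
      have hnl : n < l := lt_of_le_of_ne hl1 fun h => by rw [h, hl2] at hnR; simp at hnR
      have hln : l < n' := lt_of_le_of_ne hn1 fun h => by rw [← h, hl2] at hn2; simp at hn2
      refine ⟨hnl.trans hln, hn2, (seg Δ n l).map Prod.fst, n' - l, ?_, ?_, by omega, ?_⟩
      · rw [seg_cons Δ hnl]; simp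
      · intro x hx
        simp only [seg, List.mem_map, List.mem_range'_1] at hx
        obtain ⟨y, ⟨i, ⟨hi1, hi2⟩, rfl⟩, rfl⟩ := hx
        have h1 := hrx i _ (hg.gt i (Δ i).1
          (Prod.ext rfl (by simpa using hl3 i hi1 (by omega))))
        rw [hend i (by omega)] at h1
        exact h1
      · rw [← seg_append Δ hnl.le hln.le,
          ← seg_right fun i h1 h2 => by simpa using hl3 i h1 h2]
        congr 1
        refine seg_left fun i h1 h2 => ?_
        have h3 : Δ i = ((Δ i).1, false) := Prod.ext rfl (by simpa using hn3 i h1 h2)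
        rw [h3, ← hH.left i _ h3, hfend i (by omega)]
    choose nx hnx using hstep
    set g : ℕ → ℕ := fun n => nx^[n] N with hgdef
    have hgs : ∀ n, g (n + 1) = nx (g n) := fun n => Function.iterate_succ_apply' nx n N
    have hgok : ∀ n, N ≤ g n ∧ (Δ (g n)).2 = true := by
      intro n
      induction n with
      | zero => exact ⟨le_rfl, hN2⟩
      | succ n ih =>
        have := hnx (g n) ih.1 ih.2
        rw [hgs]
        exact ⟨ih.1.trans this.1.le, this.2.1⟩
    have hgmono : Monotone g := monotone_nat_of_le_succ fun n => by
      rw [hgs]; exact (hnx (g n) (hgok n).1 (hgok n).2).1.le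
    refine ⟨⟨r M + 1, hJ⟩, Nat.le_add_left _ _, fun k => seg Δ (T (k - 1)) (T k),
      fun n => seg Δ (g n) (g (n + 1)), ?_, ?_, ?_⟩
    · intro k hk1 hk2
      simp only at hk2
      have hTk := hTle (k - 1) (by omega)
      have hrk : ∀ i, T (k - 1) ≤ i → i < T k → r i = k - 1 := by
        intro i hi1 hi2
        have h1 := (hT0 (k - 1) (by omega)).1
        have h2 : r (T0 (k - 1)) ≤ r i := hrmono (hTk ▸ hi1)
        rcases Nat.lt_or_ge (r M) k with hk | hk
        · have := hrM i
          omega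
        · rw [hTle k hk] at hi2
          have := (hT0 k hk).2 i hi2
          omega
      refine seg_level (Q := fun x => k ≤ ((e.symm x : Fin m) : ℕ)) (T k)
        (T k - T (k - 1)) (T (k - 1)) (by have := hTmono (Nat.sub_le k 1); omega) ?_ ?_
      · intro i hi1 hi2
        have h1 := hrk i hi1 hi2
        rw [her i _ _ h1]
        obtain ⟨x, hx⟩ | ⟨x, hx⟩ := spin_cases Δ i
        · left; rw [hx, hH.left i x hx]
        · right
          have := hrx i x (hg.gt i x hx)
          exact ⟨x, by omega, hx⟩
      · intro hlt'
        have h1 := hrk (T k - 1) (by omega) (by omega)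
        rw [her _ _ _ h1]
        obtain ⟨x, hx⟩ | ⟨x, hx⟩ := spin_cases Δ (T k - 1)
        · rw [hx, hH.left _ x hx]
        · exfalso
          rcases Nat.lt_or_ge (r M) k with hk | hk
          · have hkM : k - 1 = r M := by omega
            rw [hTgt k hk] at hx hlt'
            rw [hTk, hkM] at hlt'
            exact hN3 (N - 1) (by omega) (by omega) (by rw [hx])
          · -- the first letter does not change at an `R`-step, but its rank jumps at `T k`
            have h2 := hH.right _ x hx
            rw [Nat.sub_add_cancel (by omega)] at h2
            have h3 := (hT0 k hk).1
            rw [← hTle k hk] at h3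
            have h4 : r (T k - 1) = r (T k) := by simp only [hr]; rw [h2]
            omega
    · intro n
      have := (hnx (g n) (hgok n).1 (hgok n).2).2.2
      rw [← hgs] at this
      exact this
    · intro n
      have h1 := flatten_seg Δ hTmono (r M + 1)
      have h2 := flatten_seg Δ hgmono n
      simp only [Nat.add_sub_cancel]
      rw [h1, h2, hTz, hTgt (r M + 1) (by omega)]
      have h3 : N = g 0 := rfl
      rw [h3, seg_append Δ (Nat.zero_le _) (hgmono (Nat.zero_le n))]
      exact isPref_seg Δ _
  · rintro ⟨j, hj1, ps, bl, hps, hbl, hpre⟩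
    have hjm : (j : ℕ) - 1 < m := by omega
    set c : A := e ⟨(j : ℕ) - 1, hjm⟩ with hc
    set U : List (A × Bool) := ((List.range (j : ℕ)).map (fun k => ps (k + 1))).flatten with hU
    set V : ℕ → List (A × Bool) := fun n => ((List.range n).map bl).flatten with hV
    have hVs : ∀ n, V (n + 1) = V n ++ bl n := fun n => by
      simp [hV, List.range_succ]
    have hblc : ∀ n d, hdL (bl n) d = c := by
      intro n d
      obtain ⟨z, p, -, -, hp, h⟩ := hbl n
      rw [h, hdL_append, hdL_replicate hp, hdL_map]
    have hblg : ∀ n, GoodL (bl n) c := by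
      intro n
      obtain ⟨z, p, -, hz, hp, h⟩ := hbl n
      rw [h]
      exact (goodL_block p hp (fun x hx => (hlt j hjm x hj1).2 (hz x hx)) le_rfl).1
    have hVg : ∀ n, GoodL (V n) c ∧ hdL (V n) c = c := by
      intro n
      induction n with
      | zero => exact ⟨trivial, rfl⟩
      | succ n ih =>
        rw [hVs, goodL_append, hdL_append, hblc]
        exact ⟨⟨ih.1, hblg n⟩, ih.2⟩
    have hUg : GoodL U c := by
      have key : ∀ i, i ≤ (j : ℕ) → ∀ d : A, i - 1 ≤ ((e.symm d : Fin m) : ℕ) →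
          GoodL (((List.range i).map (fun k => ps (k + 1))).flatten) d := by
        intro i
        induction i with
        | zero => intro _ d _; exact trivial
        | succ i ih =>
          intro hi d hd
          obtain ⟨bs, hbs, h⟩ := hps (i + 1) (by omega) hi
          have him : i + 1 - 1 < m := by omega
          have h1 := goodL_level bs (a := e ⟨i + 1 - 1, him⟩) (c := d)
            (fun z hz x hx => (hlt (i + 1) him x (by omega)).2 (hbs z hz x hx))
            ((hle (i + 1) him d).2 hd)
          rw [← h] at h1
          rw [List.range_succ, List.map_append, List.flatten_append, goodL_append]
          simp only [List.map_cons, List.map_nil, List.flatten_cons, List.flatten_nil,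
            List.append_nil]
          have h2 := (hle (i + 1) him _).1 h1.2
          exact ⟨ih (by omega) _ (by omega), h1.1⟩
      exact key j le_rfl c (by simp [hc])
    have hlen : ∀ n, n ≤ (U ++ V n).length := by
      intro n
      induction n with
      | zero => exact Nat.zero_le _
      | succ n ih =>
        obtain ⟨z, p, -, -, hp, h⟩ := hbl n
        rw [hVs, h]
        simp only [List.length_append, List.length_map, List.length_replicate] at ih ⊢
        omega
    have hocc : ∀ n, OccursAt (U ++ V n) Δ 0 := fun n i hi => by
      rw [Nat.zero_add]; exact hpre n i hi
    have hoccb : ∀ n, OccursAt (bl n) Δ (U ++ V n).length := fun n => by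
      have := hocc (n + 1)
      rw [hVs, ← List.append_assoc] at this
      simpa only [Nat.zero_add] using this.right_of_append
    have hfc : ∀ n, ts (U ++ V n).length 0 = c := fun n => by
      have := hH.eq_hdL _ _ (hoccb n)
      rwa [hblc] at this
    have hok : ∀ i, (∀ a, Δ i = (a, true) → ts i 0 < a) ∧ ts i 0 ≤ ts (i + 1) 0 := by
      intro i
      have h1 := hH.good_of_goodL (U ++ V (i + 1)) 0 (hocc _) (by
        simp only [Nat.zero_add]
        rw [hfc, goodL_append, (hVg _).2]
        exact ⟨hUg, (hVg _).1⟩) i (hlen (i + 1))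
      simpa only [Nat.zero_add] using h1
    refine Good.lyndon hD ⟨fun n => (hok n).1, fun n => (hok n).2, fun n => ?_⟩
    refine ⟨_, hlen n, ?_⟩
    obtain ⟨z, p, hz, -, -, h⟩ := hbl n
    obtain ⟨x, z, rfl⟩ := List.exists_cons_of_ne_nil hz
    have h1 := hoccb n
    rw [h] at h1
    exact congrArg Prod.snd (h1 0 (Nat.succ_pos _)).symm

end EpiQP
end

section
/- A finite word v is a quasiperiod of an infinite word w if and only if v is a prefix of w, v occurs infinitely often in w, and every return to v in w has length at most |v|. -/
/-!
Identify a prefix `p n` with its length: a quasiperiod structure is then a strictly increasing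
sequence of occurrences of `v`, starting at `0`, with consecutive gaps at most `|v|`.

If such a sequence exists and `k < k'` are consecutive occurrences of `v`, take the last member
`m ≤ k` of the sequence. Its successor is an occurrence exceeding `k`, hence is at least `k'`, so
`k' ≤ m + |v| ≤ k + |v|`. Conversely, enumerating all occurrences of `v` in increasing order gives
such a sequence, the gaps being the lengths of returns. The empty word satisfies neither side: it
occurs everywhere, so its returns have length `1 > 0`.
-/

namespace EpiQP

/-- A word `p ++ u` is a prefix of `w` only if `u` occurs in `w` at position `|p|`. -/
lemma occursAt_of_isPref_append {A : Type*} {p u : List A} {w : ℕ → A}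
    (h : IsPref (p ++ u) w) : OccursAt u w p.length := by
  intro i hi
  have := h (p.length + i) (by simp; omega)
  simpa using this

lemma isPref_prefWord_append {A : Type*} {u : List A} {w : ℕ → A} {k : ℕ}
    (h : OccursAt u w k) : IsPref (prefWord w k ++ u) w := by
  intro i hi
  have hl : (prefWord w k).length = k := by simp [prefWord]
  rw [List.get_eq_getElem, List.getElem_append]
  split_ifs with hik
  · simp [prefWord]
  · have hki : k ≤ i := by simpa [hl] using hik
    have hi' : i - k < u.length := by
      have hi2 := hi
      rw [List.length_append] at hi2
      omega
    have := h (i - k) hi'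
    have e : k + (i - k) = i := by omega
    simpa [hl, e] using this

/-- If `v` occurs infinitely often and all its returns have length at most `|v|`, then any
occurrence is followed by another one at distance at most `|v|`. -/
lemma exists_next_occurrence {A : Type*} {v : List A} {w : ℕ → A}
    (hinf : ∀ N, ∃ k, N ≤ k ∧ OccursAt v w k)
    (hret : ∀ r, IsReturn v w r → r.length ≤ v.length) {k : ℕ} (hk : OccursAt v w k) :
    ∃ k', OccursAt v w k' ∧ k < k' ∧ k' ≤ k + v.length := by
  classical
  have hex : ∃ k', k < k' ∧ OccursAt v w k' := hinf (k + 1)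
  have hs := Nat.find_spec hex
  refine ⟨Nat.find hex, hs.2, hs.1, ?_⟩
  have := hret _ ⟨k, Nat.find hex, hs.1, hk, hs.2,
    fun j hj hj' ho => Nat.find_min hex hj' ⟨hj, ho⟩, rfl⟩
  simp only [List.length_ofFn] at this
  omega

/-- a finite word `v` is a quasiperiod of the infinite word `w` iff `v`
is a prefix of `w`, `v` occurs infinitely often in `w`, and every return to `v` in
`w` has length at most `|v|`. -/
theorem quasiperiod_iff_returns
    {A : Type*} [Fintype A] (v : List A) (w : ℕ → A) :
    IsQuasiperiod v w ↔
      (IsPref v w ∧ (∀ N, ∃ k, N ≤ k ∧ OccursAt v w k) ∧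
        ∀ r, IsReturn v w r → r.length ≤ v.length) := by
  constructor
  · rintro ⟨-, p, hp0, hp, hpre⟩
    have hocc : ∀ n, OccursAt v w (p n).length := fun n => occursAt_of_isPref_append (hpre n)
    have hmono : StrictMono fun n => (p n).length := strictMono_nat_of_lt_succ fun n => (hp n).1
    refine ⟨by simpa [hp0] using hpre 0, fun N => ⟨_, hmono.le_apply, hocc N⟩, ?_⟩
    rintro r ⟨k, k', -, -, -, hmin, rfl⟩
    classical
    have hex : ∃ n, k < (p n).length := ⟨k + 1, hmono.le_apply (x := k + 1)⟩
    -- the first position of the sequence beyond `k`; it is not the initial one, which is `0`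
    obtain ⟨n, hn⟩ : ∃ n, Nat.find hex = n + 1 := by
      refine Nat.exists_eq_succ_of_ne_zero fun h => ?_
      have := Nat.find_spec hex
      rw [h, hp0] at this
      simp at this
    have hlt : k < (p (n + 1)).length := hn ▸ Nat.find_spec hex
    have hle : (p n).length ≤ k := not_lt.1 (Nat.find_min hex (by omega))
    have hk' : k' ≤ (p (n + 1)).length := not_lt.1 fun h => hmin _ hlt h (hocc _)
    have := (hp n).2
    simp only [List.length_ofFn]
    omega
  · rintro ⟨hpre, hinf, hret⟩
    have h0 : OccursAt v w 0 := fun i hi => by simpa using hpre i hi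
    refine ⟨?_, ?_⟩
    · rintro rfl
      obtain ⟨k', -, h1, h2⟩ := exists_next_occurrence hinf hret h0
      simp at h2
      omega
    · choose! next hnext using
        fun k (hk : OccursAt v w k) => exists_next_occurrence hinf hret hk
      have hocc : ∀ n, OccursAt v w (next^[n] 0) := by
        intro n
        induction n with
        | zero => exact h0
        | succ n ih => rw [Function.iterate_succ_apply']; exact (hnext _ ih).1
      refine ⟨fun n => prefWord w (next^[n] 0), by simp [prefWord], fun n => ?_,
        fun n => isPref_prefWord_append (hocc n)⟩
      simpa only [prefWord, List.length_ofFn, Function.iterate_succ_apply'] using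
        (hnext _ (hocc n)).2

end EpiQP
end
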